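/- There exists an infinitely differentiable function h_∞ : (0,∞) → (0,∞) with the following properties: h_∞ is totally monotone (i.e. (−1)ⁿ h_∞⁽ⁿ⁾(x) > 0 for every n ≥ 1 and x > 0); h_∞(x) → ∞ as x → 0⁺; h_∞(x) → 0 as x → ∞; and for every infinitely differentiable function h : [0,∞) → ℝ that satisfies h'' − 2h' = h² on [0,∞) and is not identically zero, there exists c > 0 such that h(x) = h_∞(x + c) for every x ≥ 0. -/

import Mathlib

open Set Filter


/-- monotonicity from nonneg derivative on a half-line -/
lemma mono_of_deriv {f f' : ℝ → ℝ} {a : ℝ} (hf : ∀ x, a ≤ x → HasDerivAt f (f' x) x)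
    (h0 : ∀ x, a ≤ x → 0 ≤ f' x) {x y : ℝ} (hx : a ≤ x) (hxy : x ≤ y) : f x ≤ f y := by
  have : MonotoneOn f (Ici a) := by
    apply monotoneOn_of_hasDerivWithinAt_nonneg (convex_Ici a) (f' := f')
    · intro z hz; exact (hf z hz).continuousAt.continuousWithinAt
    · intro z hz; rw [interior_Ici] at hz ⊢; exact (hf z (le_of_lt hz)).hasDerivWithinAt
    · intro z hz; rw [interior_Ici] at hz; exact h0 z (le_of_lt hz)
  exact this hx (hx.trans hxy) hxy

lemma lin_growth {f f' : ℝ → ℝ} {a c : ℝ} (hf : ∀ x, a ≤ x → HasDerivAt f (f' x) x)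
    (h0 : ∀ x, a ≤ x → c ≤ f' x) {x : ℝ} (hx : a ≤ x) : f a + c * (x - a) ≤ f x := by
  have := mono_of_deriv (f := fun x => f x - c * x) (f' := fun x => f' x - c * 1) (a := a)
    (fun x hx => (hf x hx).sub ((hasDerivAt_id x).const_mul c))
    (fun x hx => by have := h0 x hx; linarith) le_rfl hx
  linarith

lemma lin_unbdd {f : ℝ → ℝ} {a b c : ℝ} (hc : 0 < c) (h : ∀ x, a ≤ x → b + c * (x - a) ≤ f x)
    (M : ℝ) : ∃ X, a ≤ X ∧ ∀ x, X ≤ x → M ≤ f x := by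
  refine ⟨max a (a + (M - b) / c), le_max_left _ _, fun x hx => ?_⟩
  have h1 := h x ((le_max_left _ _).trans hx)
  have h2 : a + (M - b) / c ≤ x := (le_max_right _ _).trans hx
  have h3 : (M - b) / c * c = M - b := by field_simp
  nlinarith

lemma exp_growth {y y' : ℝ → ℝ} {a : ℝ} (hy : ∀ x, a ≤ x → HasDerivAt y (y' x) x)
    (h0 : ∀ x, a ≤ x → 2 * y x ≤ y' x) (hya : 0 ≤ y a) {x : ℝ} (hx : a ≤ x) : y a ≤ y x := by
  have := mono_of_deriv (f := fun x => y x * Real.exp (-2 * (x - a)))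
    (f' := fun x => y' x * Real.exp (-2 * (x - a)) +
      y x * (Real.exp (-2 * (x - a)) * (-2 * 1))) (a := a)
    (fun x hx => (hy x hx).mul ((((hasDerivAt_id x).sub_const a).const_mul (-2)).exp))
    (fun x hx => by
      have := h0 x hx
      have e := Real.exp_pos (-2 * (x - a))
      nlinarith) le_rfl hx
  simp only [sub_self, mul_zero, Real.exp_zero, mul_one] at this
  have e : Real.exp (-2 * (x - a)) ≤ 1 := Real.exp_le_one_iff.2 (by linarith)
  have e0 := Real.exp_pos (-2 * (x - a))
  nlinarith

/-- Lemma A -/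
lemma lemA {u y y' : ℝ → ℝ} {a B : ℝ} (hu : ∀ x, a ≤ x → HasDerivAt u (y x) x)
    (hy : ∀ x, a ≤ x → HasDerivAt y (y' x) x)
    (h0 : ∀ x, a ≤ x → 2 * y x ≤ y' x) (hB : ∀ x, a ≤ x → u x ≤ B) {x : ℝ} (hx : a ≤ x) :
    y x ≤ 0 := by
  by_contra! hpos
  have g : ∀ z, x ≤ z → y x ≤ y z := fun z hz =>
    exp_growth (fun w hw => hy w (hx.trans hw)) (fun w hw => h0 w (hx.trans hw)) hpos.le hz
  obtain ⟨X, hX, h⟩ := lin_unbdd hpos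
    (fun z hz => lin_growth (fun w hw => hu w (hx.trans hw)) g hz) (B + 1)
  have := h X le_rfl
  have := hB X (hx.trans hX)
  linarith

lemma lemA_strict {u y y' : ℝ → ℝ} {a B : ℝ} (hu : ∀ x, a ≤ x → HasDerivAt u (y x) x)
    (hy : ∀ x, a ≤ x → HasDerivAt y (y' x) x)
    (h0 : ∀ x, a ≤ x → 2 * y x < y' x) (hB : ∀ x, a ≤ x → u x ≤ B) {x : ℝ} (hx : a ≤ x) :
    y x < 0 := by
  have hle : ∀ z, a ≤ z → y z ≤ 0 := fun z hz => lemA hu hy (fun w hw => (h0 w hw).le) hB hz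
  refine lt_of_le_of_ne (hle x hx) (fun h => ?_)
  have hz : ∀ z, x ≤ z → y z = 0 := by
    intro z hz
    refine le_antisymm (hle z (hx.trans hz)) ?_
    have := exp_growth (fun w hw => hy w (hx.trans hw)) (fun w hw => (h0 w (hx.trans hw)).le)
      h.ge hz
    linarith
  have h1 : HasDerivAt y (y' (x+1)) (x+1) := hy _ (by linarith)
  have h2 : HasDerivAt y 0 (x+1) := by
    apply (hasDerivAt_const (x+1) (0:ℝ)).congr_of_eventuallyEq
    filter_upwards [Ioi_mem_nhds (show x < x + 1 by linarith)] with w hw using hz w (le_of_lt hw)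
  have h3 := h1.unique h2
  have := h0 (x+1) (by linarith)
  rw [hz (x+1) (by linarith), h3] at this
  linarith

lemma lemB {u y y' : ℝ → ℝ} {a B M : ℝ} (hu : ∀ x, a ≤ x → HasDerivAt u (y x) x)
    (hy : ∀ x, a ≤ x → HasDerivAt y (y' x) x) (hM : 0 ≤ M)
    (h0 : ∀ x, a ≤ x → y' x ≤ 2 * y x + M) (hB : ∀ x, a ≤ x → B ≤ u x) {x : ℝ} (hx : a ≤ x) :
    - (M / 2) ≤ y x := by
  have := lemA (u := fun x => - u x - M / 2 * x) (y := fun x => - y x - M / 2 * 1)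
    (y' := fun x => - y' x) (a := a) (B := -B - M / 2 * a)
    (fun x hx => (hu x hx).neg.sub ((hasDerivAt_id x).const_mul _))
    (fun x hx => (hy x hx).neg.sub_const _)
    (fun x hx => by have := h0 x hx; linarith)
    (fun x hx => by have := hB x hx; nlinarith) hx
  linarith

/-- Riccati blow-up -/
lemma blowY {y y' : ℝ → ℝ} {a c : ℝ} (hc : 0 < c) (hy : ∀ x, a ≤ x → HasDerivAt y (y' x) x)
    (hpos : ∀ x, a ≤ x → 0 < y x) (h : ∀ x, a ≤ x → c * y x ^ 2 ≤ y' x) : False := by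
  obtain ⟨X, hX, hh⟩ := lin_unbdd (f := fun x => - (y x)⁻¹) hc
    (fun z hz => lin_growth (f := fun x => - (y x)⁻¹) (f' := fun x => - (-(y' x) / y x ^ 2))
      (a := a) (c := c)
      (fun w hw => ((hy w hw).inv (hpos w hw).ne').neg)
      (fun w hw => by
        have := hpos w hw
        have h2 := h w hw
        rw [neg_div, neg_neg, le_div_iff₀ (by positivity)]; exact h2) hz) 0
  have := hh X le_rfl
  have := inv_pos.2 (hpos X hX)
  linarith

lemma blowBL {u p : ℝ → ℝ} {a c : ℝ} (hc : 0 < c) (hu : ∀ x, a ≤ x → HasDerivAt u (p x) x)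
    (hpos : ∀ x, a ≤ x → 0 < u x) (hp : ∀ x, a ≤ x → 0 ≤ p x)
    (h : ∀ x, a ≤ x → c ^ 2 * u x ^ 3 ≤ p x ^ 2) : False := by
  refine blowY (y := fun x => √(u x)) (y' := fun x => p x / (2 * √(u x))) (a := a)
    (c := c / 2) (by positivity) (fun x hx => (hu x hx).sqrt (hpos x hx).ne')
    (fun x hx => Real.sqrt_pos.2 (hpos x hx)) (fun x hx => ?_)
  have h1 := hpos x hx
  have h2 := hp x hx
  have h3 := h x hx
  have hs := Real.sqrt_pos.2 h1
  have hs2 := Real.sq_sqrt h1.le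
  rw [le_div_iff₀ (by positivity)]
  have : (c * √(u x) ^ 3) ≤ p x := by
    refine (sq_le_sq₀ (by positivity) h2).1 ?_
    calc (c * √(u x) ^ 3)^2 = c^2 * (√(u x)^2)^3 := by ring
      _ ≤ _ := by rw [hs2]; exact h3
  linarith [this, show c / 2 * √(u x) ^ 2 * (2 * √(u x)) = c * √(u x) ^ 3 by ring]


/-- `(h,v)` solves the first order system on `(a,∞)`. -/
def HSol (a : ℝ) (h v : ℝ → ℝ) : Prop :=
  ∀ x, a < x → HasDerivAt h (v x) x ∧ HasDerivAt v (2 * v x + h x ^ 2) x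

lemma HSol.mono {a b : ℝ} {h v : ℝ → ℝ} (hs : HSol a h v) (hab : a ≤ b) : HSol b h v :=
  fun x hx => hs x (hab.trans_lt hx)

lemma field_lip (M : ℝ) (hM : 0 ≤ M) :
    LipschitzOnWith (Real.toNNReal (2 + 2 * M)) (fun z : ℝ × ℝ => (z.2, 2 * z.2 + z.1 ^ 2))
      {z : ℝ × ℝ | |z.1| ≤ M} := by
  apply LipschitzOnWith.of_dist_le_mul
  intro z hz w hw
  rw [Real.coe_toNNReal _ (by linarith)]
  simp only [mem_ofPred_eq] at hz hw
  have h1 : dist z.1 w.1 ≤ dist z w := by rw [Prod.dist_eq]; exact le_max_left _ _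
  have h2 : dist z.2 w.2 ≤ dist z w := by rw [Prod.dist_eq]; exact le_max_right _ _
  have h0 : 0 ≤ dist z w := dist_nonneg
  rw [Prod.dist_eq (x := (z.2, _))]
  simp only [Real.dist_eq] at h1 h2 ⊢
  apply max_le
  · nlinarith
  · have e : 2 * z.2 + z.1 ^ 2 - (2 * w.2 + w.1 ^ 2)
        = 2 * (z.2 - w.2) + (z.1 + w.1) * (z.1 - w.1) := by ring
    rw [e]
    have e1 : |z.1 + w.1| ≤ 2 * M := (abs_add_le _ _).trans (by linarith)
    calc |2 * (z.2 - w.2) + (z.1 + w.1) * (z.1 - w.1)|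
        ≤ |2 * (z.2 - w.2)| + |(z.1 + w.1) * (z.1 - w.1)| := abs_add_le _ _
      _ = 2 * |z.2 - w.2| + |z.1 + w.1| * |z.1 - w.1| := by
          rw [abs_mul, abs_mul, abs_of_pos (by norm_num : (0:ℝ) < 2)]
      _ ≤ 2 * dist z w + (2 * M) * dist z w := by gcongr
      _ = _ := by ring

/-- uniqueness for the ODE on an interval -/
lemma ode_unique {α β : ℝ} {h v k w : ℝ → ℝ}
    (h1 : ∀ x ∈ Ioo α β, HasDerivAt h (v x) x ∧ HasDerivAt v (2 * v x + h x ^ 2) x)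
    (h2 : ∀ x ∈ Ioo α β, HasDerivAt k (w x) x ∧ HasDerivAt w (2 * w x + k x ^ 2) x)
    {x₀ : ℝ} (hx₀ : x₀ ∈ Ioo α β) (e1 : h x₀ = k x₀) (e2 : v x₀ = w x₀) :
    ∀ x ∈ Ioo α β, h x = k x ∧ v x = w x := by
  intro x hx
  obtain ⟨a, ha1, ha2⟩ := exists_between (lt_min hx.1 hx₀.1)
  obtain ⟨b, hb1, hb2⟩ := exists_between (max_lt hx.2 hx₀.2)
  rw [lt_min_iff] at ha2
  rw [max_lt_iff] at hb1
  have hsub : Icc a b ⊆ Ioo α β := fun y hy => ⟨ha1.trans_le hy.1, hy.2.trans_lt hb2⟩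
  have c1 : ContinuousOn h (Icc a b) := fun y hy => (h1 y (hsub hy)).1.continuousAt.continuousWithinAt
  have c2 : ContinuousOn k (Icc a b) := fun y hy => (h2 y (hsub hy)).1.continuousAt.continuousWithinAt
  obtain ⟨M1, hM1⟩ := isCompact_Icc.exists_bound_of_continuousOn c1
  obtain ⟨M2, hM2⟩ := isCompact_Icc.exists_bound_of_continuousOn c2
  have hM : 0 ≤ max M1 M2 :=
    (norm_nonneg (h x)).trans ((hM1 x ⟨ha2.1.le, hb1.1.le⟩).trans (le_max_left _ _))
  have := ODE_solution_unique_of_mem_Ioo (v := fun (_ : ℝ) (z : ℝ × ℝ) => (z.2, 2 * z.2 + z.1 ^ 2))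
    (s := fun _ => {z : ℝ × ℝ | |z.1| ≤ max M1 M2}) (a := a) (b := b) (t₀ := x₀)
    (f := fun t => (h t, v t)) (g := fun t => (k t, w t))
    (K := Real.toNNReal (2 + 2 * max M1 M2))
    (fun t ht => field_lip _ hM) ⟨ha2.2, hb1.2⟩
    (fun t ht => ⟨(h1 t (hsub (Ioo_subset_Icc_self ht))).1.prodMk
      (h1 t (hsub (Ioo_subset_Icc_self ht))).2,
      (hM1 t (Ioo_subset_Icc_self ht)).trans (le_max_left _ _)⟩)
    (fun t ht => ⟨(h2 t (hsub (Ioo_subset_Icc_self ht))).1.prodMk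
      (h2 t (hsub (Ioo_subset_Icc_self ht))).2,
      (hM2 t (Ioo_subset_Icc_self ht)).trans (le_max_right _ _)⟩) (by simp [e1, e2])
  have h3 := this ⟨ha2.1, hb1.1⟩
  simpa using h3

lemma HSol.unique {a : ℝ} {h v k w : ℝ → ℝ} (h1 : HSol a h v) (h2 : HSol a k w)
    {x₀ : ℝ} (hx₀ : a < x₀) (e1 : h x₀ = k x₀) (e2 : v x₀ = w x₀) :
    ∀ x, a < x → h x = k x ∧ v x = w x := by
  intro x hx
  exact ode_unique (α := a) (β := max x x₀ + 1) (fun y hy => h1 y hy.1) (fun y hy => h2 y hy.1)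
    ⟨hx₀, by linarith [le_max_right x x₀]⟩ e1 e2 x ⟨hx, by linarith [le_max_left x x₀]⟩

lemma HSol.v_nonpos {a : ℝ} {h v : ℝ → ℝ} (hs : HSol a h v) : ∀ x, a < x → v x ≤ 0 := by
  intro x hx
  by_contra! hpos
  have g : ∀ z, x ≤ z → v x ≤ v z := fun z hz =>
    exp_growth (fun w hw => (hs w (hx.trans_le hw)).2)
      (fun w hw => by nlinarith [sq_nonneg (h w)]) hpos.le hz
  obtain ⟨X1, hX1, H1⟩ := lin_unbdd hpos
    (fun z hz => lin_growth (fun w hw => (hs w (hx.trans_le hw)).1) g hz) 1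
  obtain ⟨X2, hX2, H2⟩ := lin_unbdd (f := fun x => v x ^ 2 / 2 - h x ^ 3 / 3)
    (show 0 < 2 * v x ^ 2 by positivity)
    (fun z hz => lin_growth (f := fun x => v x ^ 2 / 2 - h x ^ 3 / 3) (f' := fun x => 2 * v x ^ 2)
      (a := x)
      (fun w hw => by
        have h1 := (((hs w (hx.trans_le hw)).2.pow 2).div_const 2).sub
          (((hs w (hx.trans_le hw)).1.pow 3).div_const 3)
        exact h1.congr_deriv (by push_cast; ring))
      (fun w hw => by have := g w hw; nlinarith) hz) 0
  refine blowBL (u := h) (p := v) (a := max X1 X2) (c := 1 / 2) (by norm_num)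
    (fun w hw => (hs w (hx.trans_le (hX1.trans ((le_max_left _ _).trans hw)))).1)
    (fun w hw => by have := H1 w ((le_max_left _ _).trans hw); linarith)
    (fun w hw => by have := g w (hX1.trans ((le_max_left _ _).trans hw)); linarith)
    (fun w hw => ?_)
  have e1 := H1 w ((le_max_left _ _).trans hw)
  have e2 := H2 w ((le_max_right _ _).trans hw)
  have : 0 ≤ h w ^ 3 := by positivity
  nlinarith

lemma HSol.anti {a : ℝ} {h v : ℝ → ℝ} (hs : HSol a h v) {x y : ℝ} (hx : a < x) (hxy : x ≤ y) :
    h y ≤ h x := by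
  have := mono_of_deriv (f := fun x => - h x) (f' := fun x => - v x) (a := x)
    (fun w hw => (hs w (hx.trans_le hw)).1.neg)
    (fun w hw => by have := hs.v_nonpos w (hx.trans_le hw); linarith) le_rfl hxy
  linarith

lemma HSol.G_deriv {a : ℝ} {h v : ℝ → ℝ} (hs : HSol a h v) {x : ℝ} (hx : a < x) :
    HasDerivAt (fun x => v x - 2 * h x) (h x ^ 2) x := by
  have := (hs x hx).2.sub ((hs x hx).1.const_mul 2)
  exact this.congr_deriv (by ring)

lemma HSol.nonneg {a : ℝ} {h v : ℝ → ℝ} (hs : HSol a h v) : ∀ x, a < x → 0 ≤ h x := by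
  intro x hx
  by_contra! hneg
  obtain ⟨X, hX, H⟩ := lin_unbdd (f := fun x => v x - 2 * h x) (show 0 < h x ^ 2 by nlinarith)
    (fun z hz => lin_growth (fun w hw => hs.G_deriv (hx.trans_le hw))
      (fun w hw => by have := hs.anti hx hw; nlinarith) hz) 1
  refine blowY (y := fun x => v x - 2 * h x) (a := X) (c := 1 / 4) (by norm_num)
    (fun w hw => hs.G_deriv (hx.trans_le (hX.trans hw)))
    (fun w hw => by have := H w hw; linarith) (fun w hw => ?_)
  have e1 := H w hw
  have e2 := hs.v_nonpos w (hx.trans_le (hX.trans hw))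
  nlinarith

lemma HSol.pos {a : ℝ} {h v : ℝ → ℝ} (hs : HSol a h v) (hne : ∃ x, a < x ∧ h x ≠ 0) :
    ∀ x, a < x → 0 < h x := by
  intro x hx
  refine lt_of_le_of_ne (hs.nonneg x hx) (fun h0 => ?_)
  have hz : ∀ z, x ≤ z → h z = 0 := fun z hz =>
    le_antisymm (by have := hs.anti hx hz; linarith) (hs.nonneg z (hx.trans_le hz))
  have hv : v (x + 1) = 0 := by
    apply (hs (x+1) (by linarith)).1.unique
    apply (hasDerivAt_const (x+1) (0:ℝ)).congr_of_eventuallyEq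
    filter_upwards [Ioi_mem_nhds (show x < x + 1 by linarith)] with w hw using hz w (le_of_lt hw)
  obtain ⟨y, hy, hy0⟩ := hne
  have hs0 : HSol a (fun _ => 0) (fun _ => 0) := fun x _ => by
    simpa using hasDerivAt_const x (0:ℝ)
  exact hy0 (hs.unique hs0 (show a < x + 1 by linarith) (hz _ (by linarith)) hv y hy).1

lemma HSol.tendsto {a : ℝ} {h v : ℝ → ℝ} (hs : HSol a h v) : Tendsto h atTop (nhds 0) := by
  rw [Metric.tendsto_atTop]
  intro ε hε
  have : ∃ x, a < x ∧ h x < ε := by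
    by_contra! hc
    have hx : a < a + 1 := by linarith
    obtain ⟨X, hX, H⟩ := lin_unbdd (f := fun x => v x - 2 * h x) (show 0 < ε ^ 2 by positivity)
      (fun z hz => lin_growth (fun w hw => hs.G_deriv (hx.trans_le hw))
        (fun w hw => by have := hc w (hx.trans_le hw); nlinarith) hz) 1
    have e1 := H X le_rfl
    have e2 := hs.v_nonpos X (hx.trans_le hX)
    have e3 := hc X (hx.trans_le hX)
    linarith
  obtain ⟨x, hx, hxe⟩ := this
  refine ⟨x, fun y hy => ?_⟩
  rw [Real.dist_eq, sub_zero, abs_of_nonneg (hs.nonneg y (hx.trans_le hy))]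
  exact (hs.anti hx hy).trans_lt hxe

/-- two solutions that share a value of `h` coincide -/
lemma HSol.unique' {a : ℝ} {h v k w : ℝ → ℝ} (h1 : HSol a h v) (h2 : HSol a k w)
    {x₀ : ℝ} (hx₀ : a < x₀) (e1 : h x₀ = k x₀) :
    ∀ x, a < x → h x = k x ∧ v x = w x := by
  have D1 : ∀ x, x₀ ≤ x → HasDerivAt (fun x => (h x - k x) ^ 2 / 2)
      ((h x - k x) * (v x - w x)) x := fun x hx => by
    have := (((h1 x (hx₀.trans_le hx)).1.sub (h2 x (hx₀.trans_le hx)).1).pow 2).div_const 2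
    exact this.congr_deriv (by simp; ring)
  have D2 : ∀ x, x₀ ≤ x → HasDerivAt (fun x => (h x - k x) * (v x - w x))
      ((v x - w x) ^ 2 + 2 * ((h x - k x) * (v x - w x)) + (h x + k x) * (h x - k x) ^ 2) x :=
    fun x hx => by
    have := ((h1 x (hx₀.trans_le hx)).1.sub (h2 x (hx₀.trans_le hx)).1).mul
      ((h1 x (hx₀.trans_le hx)).2.sub (h2 x (hx₀.trans_le hx)).2)
    exact this.congr_deriv (by simp; ring)
  have N : ∀ x, x₀ ≤ x → 2 * ((h x - k x) * (v x - w x)) ≤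
      ((v x - w x) ^ 2 + 2 * ((h x - k x) * (v x - w x)) + (h x + k x) * (h x - k x) ^ 2) :=
    fun x hx => by
      have p1 := h1.nonneg x (hx₀.trans_le hx)
      have p2 := h2.nonneg x (hx₀.trans_le hx)
      have : 0 ≤ (v x - w x) ^ 2 + (h x + k x) * (h x - k x) ^ 2 := by positivity
      linarith
  have hle : ∀ x, x₀ ≤ x → (h x - k x) * (v x - w x) ≤ 0 := fun x hx =>
    lemA D1 D2 N (B := h x₀ ^ 2) (fun x hx => by
      have p1 := h1.nonneg x (hx₀.trans_le hx)
      have p2 := h2.nonneg x (hx₀.trans_le hx)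
      have q1 := h1.anti hx₀ hx
      have q2 := h2.anti hx₀ hx
      rw [← e1] at q2
      nlinarith) hx
  have hd : ∀ x, x₀ ≤ x → h x = k x := fun x hx => by
    have := mono_of_deriv (fun x hx => (D1 x hx).neg) (fun x hx => by
      have := hle x hx; linarith) le_rfl hx
    simp only [Pi.neg_apply, e1] at this
    have h3 : (h x - k x) ^ 2 = 0 := le_antisymm (by linarith) (sq_nonneg _)
    have := pow_eq_zero_iff (two_ne_zero) |>.1 h3
    linarith
  have hv : v (x₀ + 1) = w (x₀ + 1) := by
    apply (h1 (x₀+1) (by linarith)).1.unique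
    apply (h2 (x₀+1) (by linarith)).1.congr_of_eventuallyEq
    filter_upwards [Ioi_mem_nhds (show x₀ < x₀ + 1 by linarith)] with w hw using hd w (le_of_lt hw)
  exact h1.unique h2 (show a < x₀ + 1 by linarith) (hd _ (by linarith)) hv


lemma HSol.contDiff_nat {a : ℝ} {h v : ℝ → ℝ} (hs : HSol a h v) (n : ℕ) :
    ContDiffOn ℝ n h (Ioi a) ∧ ContDiffOn ℝ n v (Ioi a) := by
  induction n with
  | zero =>
    constructor
    · exact contDiffOn_zero.2 (fun x hx => (hs x hx).1.continuousAt.continuousWithinAt)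
    · exact contDiffOn_zero.2 (fun x hx => (hs x hx).2.continuousAt.continuousWithinAt)
  | succ n ih =>
    constructor
    · push_cast
      rw [contDiffOn_succ_iff_deriv_of_isOpen isOpen_Ioi]
      refine ⟨fun x hx => (hs x hx).1.differentiableAt.differentiableWithinAt, by simp, ?_⟩
      exact ih.2.congr (fun x hx => (hs x hx).1.deriv)
    · push_cast
      rw [contDiffOn_succ_iff_deriv_of_isOpen isOpen_Ioi]
      refine ⟨fun x hx => (hs x hx).2.differentiableAt.differentiableWithinAt, by simp, ?_⟩
      exact ((contDiffOn_const.mul ih.2).add (ih.1.pow 2)).congr (fun x hx => (hs x hx).2.deriv)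

lemma HSol.contDiff {a : ℝ} {h v : ℝ → ℝ} (hs : HSol a h v) :
    ContDiffOn ℝ (⊤ : ℕ∞) h (Ioi a) ∧ ContDiffOn ℝ (⊤ : ℕ∞) v (Ioi a) :=
  ⟨contDiffOn_infty.2 fun n => (hs.contDiff_nat n).1,
   contDiffOn_infty.2 fun n => (hs.contDiff_nat n).2⟩

lemma HSol.D_deriv {a : ℝ} {h v : ℝ → ℝ} (hs : HSol a h v) (n : ℕ) {x : ℝ} (hx : a < x) :
    HasDerivAt (iteratedDerivWithin n h (Ioi a)) (iteratedDerivWithin (n+1) h (Ioi a) x) x := by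
  have h1 : DifferentiableOn ℝ (iteratedDerivWithin n h (Ioi a)) (Ioi a) :=
    (hs.contDiff_nat (n+1)).1.differentiableOn_iteratedDerivWithin
      (by exact_mod_cast Nat.lt_succ_self n) (uniqueDiffOn_Ioi a)
  rw [iteratedDerivWithin_succ]
  exact ((h1 x hx).hasDerivWithinAt).hasDerivAt (Ioi_mem_nhds hx)

lemma HSol.D_rec {a : ℝ} {h v : ℝ → ℝ} (hs : HSol a h v) (n : ℕ) {x : ℝ} (hx : a < x) :
    iteratedDerivWithin (n+2) h (Ioi a) x = 2 * iteratedDerivWithin (n+1) h (Ioi a) x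
      + ∑ i ∈ Finset.range (n+1), (n.choose i : ℝ) * iteratedDerivWithin i h (Ioi a) x *
        iteratedDerivWithin (n - i) h (Ioi a) x := by
  have e1 : EqOn (derivWithin h (Ioi a)) v (Ioi a) := fun y hy =>
    (derivWithin_of_isOpen isOpen_Ioi hy).trans (hs y hy).1.deriv
  have e2 : EqOn (derivWithin v (Ioi a)) (((2:ℝ) • v) + h * h) (Ioi a) := fun y hy =>
    (derivWithin_of_isOpen isOpen_Ioi hy).trans ((hs y hy).2.deriv.trans
      (by simp; ring))
  have hv : ContDiffWithinAt ℝ n v (Ioi a) x := (hs.contDiff_nat n).2 x hx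
  have hh : ContDiffWithinAt ℝ n h (Ioi a) x := (hs.contDiff_nat n).1 x hx
  have e3 : ∀ m, iteratedDerivWithin (m+1) h (Ioi a) x = iteratedDerivWithin m v (Ioi a) x := by
    intro m
    rw [iteratedDerivWithin_succ']
    exact iteratedDerivWithin_congr e1 hx
  have hx' : x ∈ Ioi a := hx
  have q1 := iteratedDerivWithin_add (f := (2:ℝ) • v) (g := h * h) hx' (uniqueDiffOn_Ioi a)
    (hv.const_smul (2:ℝ)) (hh.mul hh)
  have q2 := iteratedDerivWithin_mul hx' (uniqueDiffOn_Ioi a) hh hh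
  have q3 := iteratedDerivWithin_const_smul hx' (uniqueDiffOn_Ioi a) (2:ℝ) hv
  rw [e3, e3, iteratedDerivWithin_succ', iteratedDerivWithin_congr e2 hx', q1, q2, q3]
  simp

lemma HSol.totmono {a : ℝ} {h v : ℝ → ℝ} (hs : HSol a h v) (hpos : ∀ x, a < x → 0 < h x) (n : ℕ) :
    (∀ x, a < x → 0 < (-1 : ℝ) ^ n * iteratedDerivWithin n h (Ioi a) x) ∧
    (∀ x₀, a < x₀ → ∃ B, ∀ x, x₀ ≤ x → |iteratedDerivWithin n h (Ioi a) x| ≤ B) := by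
  induction n using Nat.strong_induction_on with
  | _ n ih =>
  rcases n with _ | n
  · simp only [pow_zero, one_mul, iteratedDerivWithin_zero]
    refine ⟨hpos, fun x₀ hx₀ => ⟨h x₀, fun x hx => ?_⟩⟩
    rw [abs_of_pos (hpos x (hx₀.trans_le hx))]
    exact hs.anti hx₀ hx
  · set D := fun n => iteratedDerivWithin n h (Ioi a) with hD
    set f : ℝ → ℝ := fun x => ∑ i ∈ Finset.range (n+1), (n.choose i : ℝ) * D i x * D (n - i) x
      with hf
    have sq : ((-1:ℝ)^n) * (-1)^n = 1 := by rw [← mul_pow]; norm_num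
    have fpos : ∀ x, a < x → 0 < (-1 : ℝ) ^ n * f x := by
      intro x hx
      simp only [hf, Finset.mul_sum]
      apply Finset.sum_pos
      · intro i hi
        have hi' : i ≤ n := Nat.lt_succ_iff.1 (Finset.mem_range.1 hi)
        have p1 := (ih i (by omega)).1 x hx
        have p2 := (ih (n - i) (by omega)).1 x hx
        have p3 : (0:ℝ) < n.choose i := by exact_mod_cast Nat.choose_pos hi'
        have e : (-1:ℝ)^n = (-1)^i * (-1)^(n-i) := by rw [← pow_add]; congr 1; omega
        rw [e]
        calc (0:ℝ) < n.choose i * ((-1)^i * D i x) * ((-1)^(n-i) * D (n-i) x) := by positivity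
          _ = _ := by ring
      · simp
    have fbd : ∀ x₀, a < x₀ → ∃ B, 0 ≤ B ∧ ∀ x, x₀ ≤ x → |f x| ≤ B := by
      intro x₀ hx₀
      have : ∀ i : ℕ, ∃ B, i ≤ n → ∀ x, x₀ ≤ x → |D i x| ≤ B := by
        intro i
        by_cases hi : i ≤ n
        · obtain ⟨B, hB⟩ := (ih i (by omega)).2 x₀ hx₀
          exact ⟨B, fun _ => hB⟩
        · exact ⟨0, fun h => absurd h hi⟩
      choose B hB using this
      have key : ∀ x, x₀ ≤ x → |f x| ≤ ∑ i ∈ Finset.range (n+1), (n.choose i : ℝ) * B i * B (n - i) := by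
        intro x hx
        refine (Finset.abs_sum_le_sum_abs _ _).trans (Finset.sum_le_sum fun i hi => ?_)
        have hi' : i ≤ n := Nat.lt_succ_iff.1 (Finset.mem_range.1 hi)
        rw [abs_mul, abs_mul, abs_of_nonneg (Nat.cast_nonneg _)]
        have b1 := hB i hi' x hx
        have b2 := hB (n - i) (by omega) x hx
        have b3 := (abs_nonneg _).trans b1
        gcongr
      exact ⟨_, (abs_nonneg _).trans (key x₀ le_rfl), key⟩
    have d1 : ∀ x, a < x → HasDerivAt (fun x => (-1:ℝ)^n * D n x) ((-1:ℝ)^n * D (n+1) x) x :=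
      fun x hx => (hs.D_deriv n hx).const_mul _
    have d2 : ∀ x, a < x → HasDerivAt (fun x => (-1:ℝ)^n * D (n+1) x)
        (2 * ((-1:ℝ)^n * D (n+1) x) + (-1:ℝ)^n * f x) x := fun x hx => by
      refine ((hs.D_deriv (n+1) hx).const_mul ((-1:ℝ)^n)).congr_deriv ?_
      rw [show n + 1 + 1 = n + 2 from rfl, hs.D_rec n hx]
      simp only [hf, hD]
      ring
    have neg : ∀ x, a < x → (-1:ℝ)^n * D (n+1) x < 0 := by
      intro x hx
      obtain ⟨B, hB⟩ := (ih n (by omega)).2 x hx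
      refine lemA_strict (a := x) (B := B) (fun y hy => d1 y (hx.trans_le hy))
        (fun y hy => d2 y (hx.trans_le hy))
        (fun y hy => by have := fpos y (hx.trans_le hy); linarith)
        (fun y hy => ?_) le_rfl
      have := hB y hy
      refine (le_abs_self _).trans ?_
      rw [abs_mul, abs_pow, abs_neg, abs_one, one_pow, one_mul]
      exact this
    refine ⟨fun x hx => ?_, fun x₀ hx₀ => ?_⟩
    · have := neg x hx
      rw [pow_succ]
      simp only [hD] at this
      linarith
    · obtain ⟨M, hM0, hM⟩ := fbd x₀ hx₀
      refine ⟨M / 2, fun x hx => ?_⟩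
      have ab : ∀ z : ℝ, |(-1:ℝ)^n * z| = |z| := fun z => by
        rw [abs_mul, abs_pow, abs_neg, abs_one, one_pow, one_mul]
      have l1 := lemB (a := x₀) (B := 0) (fun y hy => d1 y (hx₀.trans_le hy))
        (fun y hy => d2 y (hx₀.trans_le hy)) hM0
        (fun y hy => by
          have h1 := hM y hy
          have h2 := le_abs_self ((-1:ℝ)^n * f y)
          rw [ab] at h2
          linarith)
        (fun y hy => ((ih n (by omega)).1 y (hx₀.trans_le hy)).le) hx
      rw [← ab, abs_of_neg (neg x (hx₀.trans_le hx))]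
      linarith

lemma HSol.strict {a : ℝ} {h v : ℝ → ℝ} (hs : HSol a h v) (hpos : ∀ x, a < x → 0 < h x)
    {x : ℝ} (hx : a < x) : v x < 0 ∧ 0 < 2 * v x + h x ^ 2 := by
  have h1 := (hs.totmono hpos 1).1 x hx
  have h2 := (hs.totmono hpos 2).1 x hx
  have e1 : iteratedDerivWithin 1 h (Ioi a) x = v x := by
    rw [iteratedDerivWithin_one, derivWithin_of_isOpen isOpen_Ioi hx]
    exact (hs x hx).1.deriv
  have e2 := hs.D_rec 0 hx
  simp only [zero_add, e1, Finset.range_one, Finset.sum_singleton, Nat.choose_self,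
    iteratedDerivWithin_zero] at e2
  rw [e1] at h1
  rw [e2] at h2
  simp at h2
  constructor <;> nlinarith

/-- no positive solution on the whole line -/
lemma no_entire {h v : ℝ → ℝ} (hs : ∀ a, HSol a h v) (hpos : ∀ x, 0 < h x) : False := by
  have st : ∀ x, v x < 0 ∧ 0 < 2 * v x + h x ^ 2 := fun x =>
    (hs (x - 1)).strict (fun y _ => hpos y) (by linarith)
  have d := fun x => hs (x - 1) x (by linarith)
  set u : ℝ → ℝ := fun t => h (-t) with hu
  set p : ℝ → ℝ := fun t => - v (-t) with hp
  have du : ∀ t, HasDerivAt u (p t) t := fun t =>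
    ((d (-t)).1.comp t (hasDerivAt_neg t)).congr_deriv (by simp [hp])
  have dp : ∀ t, HasDerivAt p (-2 * p t + u t ^ 2) t := fun t =>
    ((d (-t)).2.comp t (hasDerivAt_neg t)).neg.congr_deriv (by simp [hp, hu])
  have upos : ∀ t, 0 < u t := fun t => hpos _
  have ppos : ∀ t, 0 < p t := fun t => by have := (st (-t)).1; simp only [hp]; linarith
  have pinc : ∀ t, 0 < -2 * p t + u t ^ 2 := fun t => by
    have := (st (-t)).2; simp only [hp, hu]; linarith
  have pge : ∀ t, 0 ≤ t → p 0 ≤ p t := fun t ht =>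
    mono_of_deriv (fun x _ => dp x) (fun x _ => (pinc x).le) le_rfl ht
  have ubig : ∀ M, ∃ X, 0 ≤ X ∧ ∀ x, X ≤ x → M ≤ u x := fun M =>
    lin_unbdd (ppos 0) (fun z hz => lin_growth (fun x _ => du x) pge hz) M
  set E0 := p 0 ^ 2 / 2 - u 0 ^ 3 / 3 with hE0
  have E : ∀ t, 0 ≤ t → p t ^ 2 / 2 - u t ^ 3 / 3 ≤ E0 := by
    intro t ht
    have := mono_of_deriv (f := fun t => -(p t ^ 2 / 2 - u t ^ 3 / 3)) (f' := fun t => 2 * p t ^ 2)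
      (a := 0) (fun x _ => by
        have := ((((dp x).pow 2).div_const 2).sub (((du x).pow 3).div_const 3)).neg
        exact this.congr_deriv (by push_cast; ring)) (fun x _ => by positivity) le_rfl ht
    simp only [hE0]
    linarith
  obtain ⟨T1, hT1, U1⟩ := ubig (max 1 (|E0|))
  have p4 : ∀ t, T1 ≤ t → p t ≤ u t ^ 2 / 4 + 4 * u t := by
    intro t ht
    have e1 := (le_max_left _ _).trans (U1 t ht)
    have e2 := (le_max_right _ _).trans (U1 t ht)
    have e3 := E t (hT1.trans ht)
    have e4 : u t ≤ u t ^ 3 := le_self_pow₀ e1 (by norm_num)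
    have e5 := le_abs_self E0
    have e6 : p t ^ 2 ≤ 4 * u t ^ 3 := by
      have : 0 ≤ u t ^ 3 := by positivity
      linarith
    refine (sq_le_sq₀ (ppos t).le (by positivity)).1 ?_
    have : 0 ≤ (u t ^ 2 / 4) ^ 2 + (4 * u t)^2 - 2 * u t ^3 := by
      nlinarith [sq_nonneg (u t ^ 2 / 4 - 4 * u t)]
    nlinarith
  set F : ℝ → ℝ := fun t => p t ^ 2 / 2 - u t ^ 3 / 3 + u t ^ 3 / 6 + 4 * u t ^ 2 with hF
  have FF : ∀ t, T1 ≤ t → F T1 ≤ F t := by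
    intro t ht
    refine mono_of_deriv (f := F) (f' := fun t => 2 * p t * (u t ^ 2 / 4 + 4 * u t - p t))
      (a := T1) (fun x _ => by
        have := (((((dp x).pow 2).div_const 2).sub (((du x).pow 3).div_const 3)).add
          (((du x).pow 3).div_const 6)).add (((du x).pow 2).const_mul 4)
        exact this.congr_deriv (by push_cast; ring)) (fun x hx => ?_) le_rfl ht
    have := p4 x hx
    have := ppos x
    apply mul_nonneg <;> linarith
  obtain ⟨T2, hT2, U2⟩ := ubig (100 + |F T1|)
  refine blowBL (u := u) (p := p) (a := max T1 T2) (c := 1/4) (by norm_num) (fun x _ => du x)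
    (fun x _ => upos x) (fun x _ => (ppos x).le) (fun x hx => ?_)
  have f1 := FF x ((le_max_left _ _).trans hx)
  have f2 := U2 x ((le_max_right _ _).trans hx)
  have f3 := neg_abs_le (F T1)
  have f4 := abs_nonneg (F T1)
  have f5 : |F T1| ≤ u x ^ 2 := by nlinarith
  have f6 : 100 * u x ^ 2 ≤ u x ^ 3 := by
    have : 0 ≤ u x ^ 2 * (u x - 100) := mul_nonneg (by positivity) (by linarith)
    nlinarith
  simp only [hF] at f1
  have f7 : p x ^ 2 / 2 - u x ^ 3 / 3 + u x ^ 3 / 6 + 4 * u x ^ 2 ≥ - u x ^2 := by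
    simp only [hF] at f3 f5; linarith
  nlinarith


/-- truncated square -/
noncomputable def phiT (z : ℝ) : ℝ := (max 0 (min z (1/4))) ^ 2

lemma phiT_cont : Continuous phiT := by unfold phiT; fun_prop

lemma phiT_nonneg (z : ℝ) : 0 ≤ phiT z := sq_nonneg _

lemma phiT_le (z : ℝ) : phiT z ≤ 1 := by
  unfold phiT
  have h1 : max 0 (min z (1/4)) ≤ (1/4 : ℝ) := max_le (by norm_num) (min_le_right _ _)
  have h2 : (0:ℝ) ≤ max 0 (min z (1/4)) := le_max_left _ _
  nlinarith

lemma phiT_lip (z w : ℝ) : |phiT z - phiT w| ≤ 1 / 2 * |z - w| := by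
  unfold phiT
  have h1 : max 0 (min z (1/4)) ≤ (1/4 : ℝ) := max_le (by norm_num) (min_le_right _ _)
  have h2 : (0:ℝ) ≤ max 0 (min z (1/4)) := le_max_left _ _
  have h1' : max 0 (min w (1/4)) ≤ (1/4 : ℝ) := max_le (by norm_num) (min_le_right _ _)
  have h2' : (0:ℝ) ≤ max 0 (min w (1/4)) := le_max_left _ _
  have h3 : |max 0 (min z (1/4)) - max 0 (min w (1/4))| ≤ |z - w| := by
    have a1 := abs_max_sub_max_le_abs (min z (1/4)) (min w (1/4)) (0:ℝ)
    rw [max_comm _ (0:ℝ), max_comm _ (0:ℝ)] at a1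
    refine a1.trans ?_
    have := abs_min_sub_min_le_max z (1/4) w (1/4)
    simpa using this
  rw [sq_sub_sq, abs_mul]
  have h4 : |max 0 (min z (1/4)) + max 0 (min w (1/4))| ≤ 1/2 := by
    rw [abs_of_nonneg (by positivity)]; linarith
  gcongr

lemma phiT_zero {z : ℝ} (hz : z ≤ 0) : phiT z = 0 := by
  unfold phiT
  rw [max_eq_left (min_le_of_left_le hz)]; norm_num

lemma phiT_sq {z : ℝ} (hz : 0 ≤ z) (hz' : z ≤ 1/4) : phiT z = z ^ 2 := by
  unfold phiT
  rw [min_eq_left hz', max_eq_right hz]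

lemma phiF_int {H : ℝ → ℝ} (hH : Continuous H) (y : ℝ) :
    MeasureTheory.IntegrableOn (fun t => Real.exp (-2 * t) * phiT (H t)) (Ioi y) := by
  refine MeasureTheory.Integrable.mono' (integrableOn_exp_mul_Ioi (show (-2:ℝ) < 0 by norm_num) y)
    ?_ ?_
  · have := phiT_cont
    exact Continuous.aestronglyMeasurable (by fun_prop)
  · refine Filter.Eventually.of_forall fun t => ?_
    rw [norm_mul, Real.norm_of_nonneg (Real.exp_pos _).le, Real.norm_of_nonneg (phiT_nonneg _)]
    exact mul_le_of_le_one_right (Real.exp_pos _).le (phiT_le _)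

noncomputable def VT (H : ℝ → ℝ) (y : ℝ) : ℝ :=
  Real.exp (2 * y) * ∫ t in Ioi y, Real.exp (-2 * t) * phiT (H t)

lemma VT_nonneg (H : ℝ → ℝ) (y : ℝ) : 0 ≤ VT H y := by
  unfold VT
  refine mul_nonneg (Real.exp_pos _).le (MeasureTheory.integral_nonneg fun t => ?_)
  exact mul_nonneg (Real.exp_pos _).le (phiT_nonneg _)

lemma VT_deriv {H : ℝ → ℝ} (hH : Continuous H) (y : ℝ) :
    HasDerivAt (VT H) (2 * VT H y - phiT (H y)) y := by
  have hc := phiT_cont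
  have c1 : Continuous (fun t => Real.exp (-2 * t) * phiT (H t)) := by fun_prop
  have e : VT H = fun y => Real.exp (2 * y) * ((∫ t in Ioi (0:ℝ), Real.exp (-2 * t) * phiT (H t))
      - ∫ t in (0:ℝ)..y, Real.exp (-2 * t) * phiT (H t)) := by
    funext y
    rw [← intervalIntegral.integral_interval_add_Ioi (phiF_int hH 0) (phiF_int hH y)]
    unfold VT; ring
  have d1 : HasDerivAt (fun y => ∫ t in (0:ℝ)..y, Real.exp (-2 * t) * phiT (H t))
      (Real.exp (-2 * y) * phiT (H y)) y := c1.integral_hasStrictDerivAt 0 y |>.hasDerivAt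
  have d2 := (((hasDerivAt_id y).const_mul 2).exp).mul
    (d1.const_sub (∫ t in Ioi (0:ℝ), Real.exp (-2 * t) * phiT (H t)))
  have e2 := congrFun e y
  rw [e2]
  rw [e]
  refine d2.congr_deriv ?_
  have : Real.exp (2 * y) * Real.exp (-2 * y) = 1 := by rw [← Real.exp_add]; simp
  simp only [id]
  linear_combination (- phiT (H y)) * this

lemma VT_cont {H : ℝ → ℝ} (hH : Continuous H) : Continuous (VT H) :=
  continuous_iff_continuousAt.2 fun y => (VT_deriv hH y).continuousAt

lemma VT_diff {H K : ℝ → ℝ} (hH : Continuous H) (hK : Continuous K) {D : ℝ}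
    (hD : ∀ t, |H t - K t| ≤ D * Real.exp |t|) (y : ℝ) :
    |VT H y - VT K y| ≤ 1 / 2 * D * Real.exp |y| := by
  have D0 : 0 ≤ D := by
    have := (abs_nonneg _).trans (hD 0)
    simpa using this
  unfold VT
  rw [← mul_sub, ← MeasureTheory.integral_sub (phiF_int hH y) (phiF_int hK y), abs_mul,
    abs_of_pos (Real.exp_pos _)]
  have i1 : MeasureTheory.IntegrableOn
      (fun t => 1 / 2 * D * Real.exp |y| * Real.exp (-y) * Real.exp (-t)) (Ioi y) :=
    (integrableOn_exp_neg_Ioi y).const_mul _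
  have b : |∫ t in Ioi y, (Real.exp (-2 * t) * phiT (H t) - Real.exp (-2 * t) * phiT (K t))|
      ≤ ∫ t in Ioi y, 1 / 2 * D * Real.exp |y| * Real.exp (-y) * Real.exp (-t) := by
    rw [← Real.norm_eq_abs]
    refine MeasureTheory.norm_integral_le_of_norm_le i1 ?_
    refine (MeasureTheory.ae_restrict_mem measurableSet_Ioi).mono fun t ht => ?_
    rw [← mul_sub, norm_mul, Real.norm_of_nonneg (Real.exp_pos _).le, Real.norm_eq_abs]
    have l1 := phiT_lip (H t) (K t)
    have l2 := hD t
    have l3 : |t| ≤ |y| + (t - y) := by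
      have := abs_add_le y (t - y)
      rw [abs_of_pos (sub_pos.2 ht)] at this
      simpa using this
    have l4 : Real.exp |t| ≤ Real.exp |y| * Real.exp (-y) * Real.exp t := by
      rw [← Real.exp_add, ← Real.exp_add]
      exact Real.exp_le_exp.2 (by linarith)
    calc Real.exp (-2 * t) * |phiT (H t) - phiT (K t)|
        ≤ Real.exp (-2 * t) * (1 / 2 * (D * (Real.exp |y| * Real.exp (-y) * Real.exp t))) := by
          have : |phiT (H t) - phiT (K t)| ≤
            1 / 2 * (D * (Real.exp |y| * Real.exp (-y) * Real.exp t)) :=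
            l1.trans (by gcongr; exact l2.trans (by gcongr))
          gcongr
      _ = 1 / 2 * D * Real.exp |y| * Real.exp (-y) * (Real.exp (-2 * t) * Real.exp t) := by ring
      _ = _ := by rw [← Real.exp_add]; ring_nf
  rw [MeasureTheory.integral_const_mul, integral_exp_neg_Ioi] at b
  calc _ ≤ Real.exp (2 * y) * (1 / 2 * D * Real.exp |y| * Real.exp (-y) * Real.exp (-y)) := by
        gcongr
    _ = 1 / 2 * D * Real.exp |y| * (Real.exp (2 * y) * Real.exp (-y) * Real.exp (-y)) := by ring
    _ = _ := by rw [← Real.exp_add, ← Real.exp_add]; ring_nf; simp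

noncomputable def PT (H : ℝ → ℝ) (x : ℝ) : ℝ := 1 / 4 - ∫ y in (0:ℝ)..x, VT H y

lemma PT_deriv {H : ℝ → ℝ} (hH : Continuous H) (x : ℝ) : HasDerivAt (PT H) (- VT H x) x :=
  ((VT_cont hH).integral_hasStrictDerivAt 0 x).hasDerivAt.const_sub _

lemma PT_cont {H : ℝ → ℝ} (hH : Continuous H) : Continuous (PT H) :=
  continuous_iff_continuousAt.2 fun y => (PT_deriv hH y).continuousAt

lemma int_exp_abs (x : ℝ) : |(∫ y in (0:ℝ)..x, Real.exp (|y|))| ≤ Real.exp |x| := by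
  rcases le_total 0 x with hx | hx
  · have : ∫ y in (0:ℝ)..x, Real.exp |y| = ∫ y in (0:ℝ)..x, Real.exp y := by
      apply intervalIntegral.integral_congr
      intro y hy
      rw [uIcc_of_le hx] at hy
      simp only [abs_of_nonneg hy.1]
    rw [this, integral_exp, Real.exp_zero, abs_of_nonneg hx, abs_of_nonneg]
    · linarith
    · linarith [Real.one_le_exp hx]
  · have : ∫ y in (0:ℝ)..x, Real.exp |y| = ∫ y in (0:ℝ)..x, Real.exp (-y) := by
      apply intervalIntegral.integral_congr
      intro y hy
      rw [uIcc_of_ge hx] at hy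
      simp only [abs_of_nonpos hy.2]
    rw [this, intervalIntegral.integral_comp_neg (fun y => Real.exp y), integral_exp, neg_zero,
      Real.exp_zero, abs_of_nonpos hx, abs_of_nonpos]
    · linarith
    · linarith [Real.one_le_exp (show 0 ≤ -x by linarith)]

lemma PT_diff {H K : ℝ → ℝ} (hH : Continuous H) (hK : Continuous K) {D : ℝ}
    (hD : ∀ t, |H t - K t| ≤ D * Real.exp |t|) (x : ℝ) :
    |PT H x - PT K x| ≤ 1 / 2 * D * Real.exp |x| := by
  have D0 : 0 ≤ D := by
    have := (abs_nonneg _).trans (hD 0)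
    simpa using this
  have e : PT H x - PT K x = - ∫ y in (0:ℝ)..x, (VT H y - VT K y) := by
    rw [intervalIntegral.integral_sub ((VT_cont hH).intervalIntegrable _ _)
      ((VT_cont hK).intervalIntegrable _ _)]
    unfold PT; ring
  rw [e, abs_neg, ← Real.norm_eq_abs]
  have h1 := intervalIntegral.norm_integral_le_abs_of_norm_le (a := 0) (b := x)
    (μ := MeasureTheory.volume) (f := fun y => VT H y - VT K y)
    (g := fun y => 1 / 2 * D * Real.exp |y|)
    (Filter.Eventually.of_forall fun y => VT_diff hH hK hD y)
    (Continuous.intervalIntegrable (by fun_prop) _ _)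
  refine h1.trans ?_
  rw [intervalIntegral.integral_const_mul, abs_mul, abs_of_nonneg (by positivity)]
  have := int_exp_abs x
  gcongr

open BoundedContinuousFunction in
noncomputable def TT (g : ℝ →ᵇ ℝ) : ℝ →ᵇ ℝ :=
  BoundedContinuousFunction.ofNormedAddCommGroup
    (fun x => Real.exp (-|x|) * PT (fun t => Real.exp |t| * g t) x)
    (by
      have : Continuous (PT (fun t => Real.exp |t| * g t)) :=
        PT_cont (by have := g.continuous; fun_prop)
      fun_prop)
    (1 / 4 + 1 / 2 * ‖g‖)
    (by
      intro x
      have c : Continuous (fun t => Real.exp |t| * g t) := by have := g.continuous; fun_prop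
      have h1 := PT_diff c (continuous_const (y := (0:ℝ))) (D := ‖g‖) (fun t => by
        rw [sub_zero, abs_mul, abs_of_pos (Real.exp_pos _), mul_comm]
        have := g.norm_coe_le_norm t
        rw [Real.norm_eq_abs] at this
        gcongr) x
      have h2 : PT (fun _ => 0) x = 1 / 4 := by
        simp [PT, VT, phiT_zero le_rfl]
      rw [h2] at h1
      have h3 : |PT (fun t => Real.exp |t| * g t) x| ≤ (1 / 4 + 1 / 2 * ‖g‖) * Real.exp |x| := by
        have e1 := Real.one_le_exp (abs_nonneg x)
        have e2 := abs_sub_abs_le_abs_sub (PT (fun t => Real.exp |t| * g t) x) (1/4)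
        rw [abs_of_pos (by norm_num : (0:ℝ) < 1/4)] at e2
        linarith
      rw [norm_mul, Real.norm_of_nonneg (Real.exp_pos _).le, Real.norm_eq_abs, Real.exp_neg,
        inv_mul_le_iff₀ (Real.exp_pos _)]
      linarith)

open BoundedContinuousFunction in
lemma TT_contr : ContractingWith (1/2) TT := by
  refine ⟨by rw [← NNReal.coe_lt_coe]; norm_num, LipschitzWith.of_dist_le_mul fun g k => ?_⟩
  rw [BoundedContinuousFunction.dist_le (by positivity)]
  intro x
  have cg : Continuous (fun t => Real.exp |t| * g t) := by have := g.continuous; fun_prop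
  have ck : Continuous (fun t => Real.exp |t| * k t) := by have := k.continuous; fun_prop
  have h1 := PT_diff cg ck (D := dist g k) (fun t => by
    rw [← mul_sub, abs_mul, abs_of_pos (Real.exp_pos _), mul_comm]
    have := BoundedContinuousFunction.dist_coe_le_dist (f := g) (g := k) t
    rw [Real.dist_eq] at this
    gcongr) x
  rw [Real.dist_eq]
  change |Real.exp (-|x|) * PT (fun t => Real.exp |t| * g t) x -
    Real.exp (-|x|) * PT (fun t => Real.exp |t| * k t) x| ≤ _
  rw [← mul_sub, abs_mul, abs_of_pos (Real.exp_pos _), Real.exp_neg,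
    inv_mul_le_iff₀ (Real.exp_pos _)]
  refine h1.trans (le_of_eq ?_)
  push_cast; ring

/-- existence of a nonzero solution on `(0,∞)` -/
lemma exists_base : ∃ h v : ℝ → ℝ, HSol 0 h v ∧ ∃ x, 0 < x ∧ h x ≠ 0 := by
  obtain ⟨g, hg⟩ : ∃ g, TT g = g := ⟨_, TT_contr.fixedPoint_isFixedPt⟩
  set h : ℝ → ℝ := fun t => Real.exp |t| * g t with hh
  have ch : Continuous h := by have := g.continuous; fun_prop
  have hfix : PT h = h := by
    funext x
    have h1 : TT g x = g x := by rw [hg]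
    have h2 : Real.exp (-|x|) * PT h x = g x := h1
    simp only [hh] at h2 ⊢
    rw [← h2, ← mul_assoc, ← Real.exp_add]; simp
  have dh : ∀ x, HasDerivAt h (- VT h x) x := fun x => by
    have := PT_deriv ch x
    rwa [hfix] at this
  have dv : ∀ x, HasDerivAt (fun x => - VT h x) (2 * (- VT h x) + phiT (h x)) x := fun x =>
    (VT_deriv ch x).neg.congr_deriv (by ring)
  have h0 : h 0 = 1 / 4 := by rw [← hfix]; simp [PT]
  have anti : Antitone h := antitone_of_hasDerivAt_nonpos dh (fun x => by
    have := VT_nonneg h x; simp only [Pi.zero_apply]; linarith)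
  have hle : ∀ x, 0 ≤ x → h x ≤ 1 / 4 := fun x hx => h0 ▸ anti hx
  have hnn : ∀ x, 0 ≤ x → 0 ≤ h x := by
    intro x hx
    by_contra! hneg
    have : (0:ℝ) ∈ Icc (h x) (h 0) := ⟨hneg.le, by rw [h0]; norm_num⟩
    obtain ⟨z, hz, hz0⟩ := intermediate_value_Icc' hx ch.continuousOn this
    have V0 : ∀ y, z ≤ y → VT h y = 0 := by
      intro y hy
      have : ∀ t ∈ Ioi y, Real.exp (-2 * t) * phiT (h t) = 0 := fun t ht => by
        rw [phiT_zero, mul_zero]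
        rw [← hz0]; exact anti (hy.trans (le_of_lt ht))
      unfold VT
      rw [MeasureTheory.setIntegral_eq_zero_of_forall_eq_zero this, mul_zero]
    have := mono_of_deriv (fun y _ => dh y) (fun y hy => by rw [V0 y hy]; simp) le_rfl hz.2
    linarith
  refine ⟨h, fun x => - VT h x, fun x hx => ⟨dh x, ?_⟩, ?_⟩
  · have := dv x
    rwa [phiT_sq (hnn x hx.le) (hle x hx.le)] at this
  · have : ∀ᶠ x in nhds (0:ℝ), h x ≠ 0 := ch.continuousAt.eventually_ne (by rw [h0]; norm_num)
    have h2 : ∀ᶠ x in nhdsWithin (0:ℝ) (Ioi 0), h x ≠ 0 ∧ x ∈ Ioi (0:ℝ) :=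
      (this.filter_mono nhdsWithin_le_nhds).and self_mem_nhdsWithin
    obtain ⟨x, hx1, hx2⟩ := h2.exists
    exact ⟨x, hx2, hx1⟩


lemma HSol.shift {a : ℝ} {h v : ℝ → ℝ} (hs : HSol a h v) (c : ℝ) :
    HSol (a - c) (fun x => h (x + c)) (fun x => v (x + c)) := fun x hx => by
  have := hs (x + c) (by linarith)
  exact ⟨this.1.comp_add_const x c, this.2.comp_add_const x c⟩

/-- a solution that stays bounded at the left end extends further -/
lemma HSol.extend {m B : ℝ} {h v : ℝ → ℝ} (hs : HSol m h v) (hpos : ∀ x, m < x → 0 < h x)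
    (hB : ∀ x, m < x → h x ≤ B) :
    ∃ m' < m, ∃ k w : ℝ → ℝ, HSol m' k w ∧ ∀ x, m < x → k x = h x := by
  have hK : IsCompact (Icc (0:ℝ) B ×ˢ Icc (-(B ^ 2)) (0:ℝ)) := isCompact_Icc.prod isCompact_Icc
  have hmem : ∀ x, m < x → (h x, v x) ∈ Icc (0:ℝ) B ×ˢ Icc (-(B ^ 2)) (0:ℝ) := fun x hx => by
    have p1 := hpos x hx
    have p2 := hB x hx
    have p3 := hs.strict hpos hx
    refine ⟨⟨p1.le, p2⟩, ⟨?_, p3.1.le⟩⟩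
    nlinarith
  obtain ⟨z, -, hz⟩ := hK (f := map (fun x => (h x, v x)) (nhdsWithin m (Ioi m))) (by
    rw [le_principal_iff, mem_map]
    filter_upwards [self_mem_nhdsWithin] with x hx using hmem x hx)
  have hfield : ContDiff ℝ 1 (fun z : ℝ × ℝ => (z.2, 2 * z.2 + z.1 ^ 2)) := by fun_prop
  obtain ⟨r, hr, ε, hε, H⟩ :=
    hfield.contDiffAt (x := z)
      |>.exists_forall_mem_closedBall_exists_eq_forall_mem_Ioo_hasDerivAt 0
  have fr : ∃ᶠ x in nhdsWithin m (Ioi m), (h x, v x) ∈ Metric.closedBall z r :=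
    hz.frequently (Metric.closedBall_mem_nhds z hr)
  have ev : ∀ᶠ x in nhdsWithin m (Ioi m), x ∈ Ioo m (m + ε) := Ioo_mem_nhdsGT (by linarith)
  obtain ⟨x₁, hx₁, hx₁'⟩ := (fr.and_eventually ev).exists
  obtain ⟨α, hα0, hα⟩ := H _ hx₁
  set k : ℝ → ℝ := fun x => (α (x - x₁)).1 with hk
  set w : ℝ → ℝ := fun x => (α (x - x₁)).2 with hw
  have sol : ∀ x ∈ Ioo (x₁ - ε) (x₁ + ε), HasDerivAt k (w x) x ∧
      HasDerivAt w (2 * w x + k x ^ 2) x := fun x hx => by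
    have d := (hα (x - x₁) ⟨by linarith [hx.1], by linarith [hx.2]⟩).comp_sub_const x x₁
    exact ⟨d.fst, d.snd⟩
  have agree := ode_unique (α := m) (β := x₁ + ε) (h := k) (v := w) (k := h) (w := v)
    (fun x hx => sol x ⟨by linarith [hx.1, hx₁'.2], hx.2⟩) (fun x hx => hs x hx.1)
    (x₀ := x₁) ⟨hx₁'.1, by linarith⟩ (by simp [hk, hα0]) (by simp [hw, hα0])
  refine ⟨x₁ - ε, by linarith [hx₁'.2], fun x => if x ≤ m then k x else h x,
    fun x => if x ≤ m then w x else v x, ?_, fun x hx => by simp [not_le.2 hx]⟩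
  intro x hx
  by_cases hxm : m < x
  · have e1 : (if x ≤ m then w x else v x) = v x := by simp [not_le.2 hxm]
    have e2 : (if x ≤ m then k x else h x) = h x := by simp [not_le.2 hxm]
    simp only [e1, e2]
    refine ⟨(hs x hxm).1.congr_of_eventuallyEq ?_, (hs x hxm).2.congr_of_eventuallyEq ?_⟩ <;>
    · filter_upwards [Ioi_mem_nhds hxm] with y hy
      simp [not_le.2 (mem_Ioi.1 hy)]
  · have e1 : (if x ≤ m then w x else v x) = w x := by simp [not_lt.1 hxm]
    have e2 : (if x ≤ m then k x else h x) = k x := by simp [not_lt.1 hxm]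
    have hx2 : x ∈ Ioo (x₁ - ε) (x₁ + ε) := ⟨hx, by linarith [hx₁'.1]⟩
    simp only [e1, e2]
    refine ⟨(sol x hx2).1.congr_of_eventuallyEq ?_, (sol x hx2).2.congr_of_eventuallyEq ?_⟩
    · filter_upwards [Ioo_mem_nhds hx2.1 hx2.2] with y hy
      split_ifs with hc
      · rfl
      · exact (agree y ⟨not_le.1 hc, hy.2⟩).1.symm
    · filter_upwards [Ioo_mem_nhds hx2.1 hx2.2] with y hy
      split_ifs with hc
      · rfl
      · exact (agree y ⟨not_le.1 hc, hy.2⟩).2.symm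

lemma exists_profile : ∃ h v : ℝ → ℝ, HSol 0 h v ∧ (∀ x, 0 < x → 0 < h x) ∧
    Tendsto h (nhdsWithin 0 (Ioi 0)) atTop := by
  classical
  obtain ⟨h0, v0, hs0, hne⟩ := exists_base
  have hA : 0 < h0 1 := hs0.pos hne 1 one_pos
  set S : Set ℝ := {a | a < 1 ∧ ∃ h v : ℝ → ℝ, HSol a h v ∧ h 1 = h0 1} with hS
  have h0S : (0:ℝ) ∈ S := ⟨one_pos, h0, v0, hs0, rfl⟩
  have ex : ∀ a : ℝ, ∃ h v : ℝ → ℝ, a ∈ S → HSol a h v ∧ h 1 = h0 1 := by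
    intro a
    by_cases ha : a ∈ S
    · obtain ⟨-, h, v, hh⟩ := ha
      exact ⟨h, v, fun _ => hh⟩
    · exact ⟨0, 0, fun h => absurd h ha⟩
  choose hh vv hsol using ex
  have agree : ∀ a ∈ S, ∀ b ∈ S, ∀ x, a < x → b < x → hh a x = hh b x ∧ vv a x = vv b x := by
    intro a ha b hb x hax hbx
    exact ((hsol a ha).1.mono (le_max_left a b)).unique' ((hsol b hb).1.mono (le_max_right a b))
      (max_lt ha.1 hb.1) ((hsol a ha).2.trans (hsol b hb).2.symm) x (max_lt hax hbx)
  have pick : ∀ x : ℝ, ∃ b, (∃ a ∈ S, a < x) → b ∈ S ∧ b < x := by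
    intro x
    by_cases hx : ∃ a ∈ S, a < x
    · obtain ⟨a, ha⟩ := hx
      exact ⟨a, fun _ => ha⟩
    · exact ⟨0, fun h => absurd h hx⟩
  choose b hb using pick
  set H : ℝ → ℝ := fun x => hh (b x) x with hH
  set V : ℝ → ℝ := fun x => vv (b x) x with hV
  have HE : ∀ a ∈ S, ∀ x, a < x → H x = hh a x ∧ V x = vv a x := fun a ha x hx =>
    agree _ (hb x ⟨a, ha, hx⟩).1 a ha x (hb x ⟨a, ha, hx⟩).2 hx
  have HS : ∀ a ∈ S, HSol a H V := by
    intro a ha x hx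
    have e := HE a ha x hx
    rw [e.1, e.2]
    refine ⟨((hsol a ha).1 x hx).1.congr_of_eventuallyEq ?_,
      ((hsol a ha).1 x hx).2.congr_of_eventuallyEq ?_⟩
    · filter_upwards [Ioi_mem_nhds hx] with y hy using (HE a ha y hy).1
    · filter_upwards [Ioi_mem_nhds hx] with y hy using (HE a ha y hy).2
  have H1 : H 1 = h0 1 := (HE 0 h0S 1 one_pos).1.trans (hsol 0 h0S).2
  have hbdd : BddBelow S := by
    by_contra hnb
    have low : ∀ a : ℝ, ∃ s ∈ S, s < a := fun a => by
      rw [not_bddBelow_iff] at hnb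
      exact hnb a
    have all : ∀ a, HSol a H V := fun a => by
      obtain ⟨s, hs, hsa⟩ := low a
      exact (HS s hs).mono hsa.le
    refine no_entire all (fun x => ?_)
    obtain ⟨s, hs, hsa⟩ := low x
    exact (HS s hs).pos ⟨1, hs.1, by rw [H1]; exact hA.ne'⟩ x hsa
  set m := sInf S with hm
  have hm0 : m ≤ 0 := csInf_le hbdd h0S
  have Hm : HSol m H V := fun x hx => by
    obtain ⟨s, hs, hsx⟩ := exists_lt_of_csInf_lt ⟨0, h0S⟩ hx
    exact HS s hs x hsx
  have Hpos : ∀ x, m < x → 0 < H x :=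
    Hm.pos ⟨1, by linarith, by rw [H1]; exact hA.ne'⟩
  have Hlim : Tendsto H (nhdsWithin m (Ioi m)) atTop := by
    rw [tendsto_atTop]
    intro B
    by_cases hB : ∃ x, m < x ∧ B ≤ H x
    · obtain ⟨x, hx, hBx⟩ := hB
      filter_upwards [Ioo_mem_nhdsGT hx] with y hy
      exact hBx.trans (Hm.anti hy.1 hy.2.le)
    · push Not at hB
      obtain ⟨m', hm', k, w, hk, hkk⟩ := Hm.extend Hpos (fun x hx => (hB x hx).le)
      have : m' ∈ S := ⟨by linarith, k, w, hk, by rw [hkk 1 (by linarith), H1]⟩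
      exact absurd (csInf_le hbdd this) (not_le.2 hm')
  refine ⟨fun x => H (x + m), fun x => V (x + m), by simpa using Hm.shift m,
    fun x hx => Hpos _ (by linarith), ?_⟩
  refine Hlim.comp ?_
  refine tendsto_nhdsWithin_iff.2 ⟨?_, ?_⟩
  · have : Tendsto (fun x : ℝ => x + m) (nhds 0) (nhds (0 + m)) :=
      (continuous_id.add continuous_const).tendsto 0
    rw [zero_add] at this
    exact this.mono_left nhdsWithin_le_nhds
  · filter_upwards [self_mem_nhdsWithin] with x hx
    simpa using hx

theorem hSol_translation_profile :
    ∃ hinf : ℝ → ℝ,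
      ContDiffOn ℝ (⊤ : ℕ∞) hinf (Set.Ioi 0) ∧
      (∀ x ∈ Set.Ioi (0 : ℝ), 0 < hinf x) ∧
      (∀ n : ℕ, 1 ≤ n → ∀ x ∈ Set.Ioi (0 : ℝ),
        0 < (-1 : ℝ) ^ n * iteratedDerivWithin n hinf (Set.Ioi 0) x) ∧
      Filter.Tendsto hinf (nhdsWithin 0 (Set.Ioi 0)) Filter.atTop ∧
      Filter.Tendsto hinf Filter.atTop (nhds 0) ∧
      ∀ h : ℝ → ℝ,
        ContDiffOn ℝ (⊤ : ℕ∞) h (Set.Ici 0) →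
        (∀ x ∈ Set.Ici (0 : ℝ),
          iteratedDerivWithin 2 h (Set.Ici 0) x
            - 2 * iteratedDerivWithin 1 h (Set.Ici 0) x = (h x) ^ 2) →
        (∃ x ∈ Set.Ici (0 : ℝ), h x ≠ 0) →
        ∃ c : ℝ, 0 < c ∧ ∀ x ∈ Set.Ici (0 : ℝ), h x = hinf (x + c) := by
  obtain ⟨H, V, hs, hpos, hlim⟩ := exists_profile
  refine ⟨H, hs.contDiff.1, hpos, fun n _ x hx => (hs.totmono hpos n).1 x hx, hlim, hs.tendsto, ?_⟩
  intro h hsm hode hne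
  have hc : ContinuousOn h (Ici 0) := hsm.continuousOn
  set v := derivWithin h (Ici 0) with hv
  have sol : HSol 0 h v := by
    intro x hx
    have hx' : x ∈ Ici (0:ℝ) := hx.le
    have d1 : DifferentiableOn ℝ h (Ici 0) := hsm.differentiableOn (by simp)
    have d2 : DifferentiableOn ℝ (iteratedDerivWithin 1 h (Ici 0)) (Ici 0) :=
      hsm.differentiableOn_iteratedDerivWithin (by exact_mod_cast WithTop.coe_lt_top 1) (uniqueDiffOn_Ici 0)
    have e1 : iteratedDerivWithin 1 h (Ici 0) = v := by
      funext y; rw [iteratedDerivWithin_one]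
    have e2 : iteratedDerivWithin 2 h (Ici 0) x = derivWithin v (Ici 0) x := by
      rw [iteratedDerivWithin_succ, e1]
    rw [e1] at d2
    have o := hode x hx'
    rw [e2, e1] at o
    refine ⟨((d1 x hx').hasDerivWithinAt).hasDerivAt (Ici_mem_nhds hx), ?_⟩
    refine (((d2 x hx').hasDerivWithinAt).hasDerivAt (Ici_mem_nhds hx)).congr_deriv ?_
    linarith
  have hne' : ∃ x, 0 < x ∧ h x ≠ 0 := by
    obtain ⟨x, hx, hx0⟩ := hne
    rcases (show (0:ℝ) ≤ x from hx).lt_or_eq with hlt | heq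
    · exact ⟨x, hlt, hx0⟩
    · subst heq
      have h1 : ∀ᶠ y in nhdsWithin (0:ℝ) (Ici 0), h y ≠ 0 := (hc 0 hx).eventually_ne hx0
      have h2 : ∀ᶠ y in nhdsWithin (0:ℝ) (Ioi 0), h y ≠ 0 ∧ y ∈ Ioi (0:ℝ) :=
        (h1.filter_mono (nhdsWithin_mono _ Ioi_subset_Ici_self)).and self_mem_nhdsWithin
      obtain ⟨y, hy1, hy2⟩ := h2.exists
      exact ⟨y, hy2, hy1⟩
  have hp := sol.pos hne'
  obtain ⟨y₀, hy₀, hy₀e⟩ : ∃ y, 0 < y ∧ H y = h 1 := by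
    obtain ⟨y1, hy1, hy1'⟩ : ∃ y, h 1 ≤ H y ∧ y ∈ Ioi (0:ℝ) :=
      ((tendsto_atTop.1 hlim (h 1)).and self_mem_nhdsWithin).exists
    obtain ⟨y2, hy2, hy2'⟩ : ∃ y, H y < h 1 ∧ y1 ≤ y :=
      ((hs.tendsto.eventually (gt_mem_nhds (hp 1 one_pos))).and (eventually_ge_atTop y1)).exists
    have c : ContinuousOn H (Icc y1 y2) := fun z hz =>
      (hs z (lt_of_lt_of_le hy1' hz.1)).1.continuousAt.continuousWithinAt
    obtain ⟨z, hz, hze⟩ := intermediate_value_Icc' hy2' c ⟨hy2.le, hy1⟩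
    exact ⟨z, lt_of_lt_of_le hy1' hz.1, hze⟩
  set c := y₀ - 1 with hcdef
  have sh := hs.shift c
  rw [zero_sub] at sh
  have agree : ∀ x, max 0 (-c) < x → h x = H (x + c) := fun x hx =>
    ((sol.mono (le_max_left 0 (-c))).unique' (sh.mono (le_max_right 0 (-c)))
      (x₀ := 1) (max_lt one_pos (by linarith)) (by simp [hcdef, hy₀e]) x hx).1
  have cpos : 0 < c := by
    by_contra! hcn
    have hmx : max 0 (-c) = -c := max_eq_right (by linarith)
    rw [hmx] at agree
    have t1 : Tendsto h (nhdsWithin (-c) (Ioi (-c))) (nhds (h (-c))) :=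
      (hc (-c) (show (0:ℝ) ≤ -c by linarith)).mono (fun y hy => by
        have : -c < y := hy
        show (0:ℝ) ≤ y
        linarith)
    have t2 : Tendsto (fun x => H (x + c)) (nhdsWithin (-c) (Ioi (-c))) atTop := by
      refine hlim.comp (tendsto_nhdsWithin_iff.2 ⟨?_, ?_⟩)
      · have : Tendsto (fun x : ℝ => x + c) (nhds (-c)) (nhds (-c + c)) :=
          (continuous_id.add continuous_const).tendsto (-c)
        rw [neg_add_cancel] at this
        exact this.mono_left nhdsWithin_le_nhds
      · filter_upwards [self_mem_nhdsWithin] with x hx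
        have : -c < x := hx
        show 0 < x + c
        linarith
    refine not_tendsto_nhds_of_tendsto_atTop t2 (h (-c)) (t1.congr' ?_)
    filter_upwards [self_mem_nhdsWithin] with x hx using agree x hx
  have hmx : max 0 (-c) = 0 := max_eq_left (by linarith)
  rw [hmx] at agree
  refine ⟨c, cpos, fun x hx => ?_⟩
  rcases (show (0:ℝ) ≤ x from hx).lt_or_eq with hlt | heq
  · exact agree x hlt
  · subst heq
    have t1 : Tendsto h (nhdsWithin 0 (Ioi 0)) (nhds (h 0)) := (hc 0 hx).mono Ioi_subset_Ici_self
    have t2 : Tendsto (fun x => H (x + c)) (nhdsWithin 0 (Ioi 0)) (nhds (H (0 + c))) :=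
      ((sh 0 (by linarith)).1.continuousAt.tendsto).mono_left nhdsWithin_le_nhds
    refine tendsto_nhds_unique t1 (t2.congr' ?_)
    filter_upwards [self_mem_nhdsWithin] with x hx using (agree x hx).symm
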